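/- Let (X, B) be a weak solution on [0,1] of the Bessel-bridge SDE dX_t = [1_{X_t>0}((y−X_t)/(1−t) + 1/X_t) + 1_{X_t<0}((−y−X_t)/(1−t) + 1/X_t)] dt + dB_t with X_0 = 0 and y > 0. Then almost surely |X_1| = y and X does not change sign on (0,1]: either X_t > 0 for all t ∈ (0,1], or X_t < 0 for all t ∈ (0,1]. -/

import Mathlib

open MeasureTheory ProbabilityTheory Set
open scoped Classical

noncomputable section

/-- `B` is a Brownian motion with respect to the filtration `F` under `P`
(properties required for times `t ≥ 0`). -/
def IsBrownian {Ω : Type*} [MeasurableSpace Ω] (F : ℝ → MeasurableSpace Ω)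
    (P : Measure Ω) (B : ℝ → Ω → ℝ) : Prop :=
  (∀ ω, Continuous fun t => B t ω) ∧
  (∀ᵐ ω ∂P, B 0 ω = 0) ∧
  (∀ t, 0 ≤ t → Measurable[F t] (B t)) ∧
  (∀ s t, 0 ≤ s → s ≤ t →
    Indep (MeasurableSpace.comap (fun ω => B t ω - B s ω)
      (inferInstance : MeasurableSpace ℝ)) (F s) P) ∧
  (∀ s t, 0 ≤ s → s ≤ t →
    Measure.map (fun ω => B t ω - B s ω) P = gaussianReal 0 (Real.toNNReal (t - s)))

/-- The drift of the Bessel-bridge SDE with endpoints `±y`. -/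
def bBridge (y t x : ℝ) : ℝ :=
  if 0 < x then (y - x) / (1 - t) + 1 / x
  else if x < 0 then (-y - x) / (1 - t) + 1 / x
  else 0

/-! While `X` is positive and bounded away from time `1`, it dominates the Bessel-type equation
`dz = (1 / z - K) dt + dB`, which does not reach `0`: its generator is bounded above on
`z - log z`, so the expectation of that function stays bounded up to the hitting time of a level
`δ`, where it is at least `-log δ`; hence `δ` is hit with probability `O(1 / (-log δ))`.
Stochastic integration is avoided by running this argument on the Euler scheme for `z`, absorbed
below `δ`, which stays below `X` up to a mesh error as long as it is not absorbed. Rational starting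
times yield one null set outside of which no solution path returns to `0` before time `1`.

The path does leave `0` immediately, since on an interval where `X = 0` the drift vanishes and `B`
would be constant. Finally, if `|X 1| ≠ y`, then the drift near time `1` would be of order
`1 / (1 - t)`, which is not integrable. -/

open Filter Topology
open scoped ENNReal NNReal

section DrivenOrbit

variable {E S Ω : Type*}

/-- The orbit `a, Φ a (w 0), Φ (Φ a (w 0)) (w 1), …` of a recursion `Φ` driven by the noise `w`.
For random independent `w` this is a Markov chain. -/
def drivenOrbit (Φ : E → S → E) (a : E) (w : ℕ → S) : ℕ → E
  | 0 => a
  | k + 1 => Φ (drivenOrbit Φ a w k) (w k)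

variable [MeasurableSpace E] [MeasurableSpace S]

lemma measurable_drivenOrbit {G : ℕ → MeasurableSpace Ω} {W : ℕ → Ω → S} {Φ : E → S → E}
    (hΦ : Measurable (Function.uncurry Φ)) (hG : Monotone G)
    (hW : ∀ k, Measurable[G (k + 1)] (W k)) (a : E) (k : ℕ) :
    Measurable[G k] fun ω => drivenOrbit Φ a (fun j => W j ω) k := by
  induction k with
  | zero => exact measurable_const
  | succ k ih => exact hΦ.comp ((ih.mono (hG k.le_succ) le_rfl).prodMk (hW k))

variable {mΩ : MeasurableSpace Ω} {P : Measure Ω}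

lemma lintegral_comp_of_indepFun [IsFiniteMeasure P] {X : Ω → E} {Y : Ω → S}
    (hX : Measurable X) (hY : Measurable Y) (hXY : IndepFun X Y P) {f : E → S → ℝ≥0∞}
    (hf : Measurable (Function.uncurry f)) :
    ∫⁻ ω, f (X ω) (Y ω) ∂P = ∫⁻ ω, ∫⁻ y, f (X ω) y ∂(P.map Y) ∂P := by
  have hlaw := (indepFun_iff_map_prod_eq_prod_map_map hX.aemeasurable hY.aemeasurable).1 hXY
  calc ∫⁻ ω, f (X ω) (Y ω) ∂P
      = ∫⁻ z, Function.uncurry f z ∂(P.map fun ω => (X ω, Y ω)) :=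
        (lintegral_map hf (hX.prodMk hY)).symm
    _ = ∫⁻ x, ∫⁻ y, f x y ∂(P.map Y) ∂(P.map X) := by
        rw [hlaw, lintegral_prod _ hf.aemeasurable]
        rfl
    _ = ∫⁻ ω, ∫⁻ y, f (X ω) y ∂(P.map Y) ∂P := lintegral_map hf.lintegral_prod_right' hX

lemma lintegral_drivenOrbit_le [IsProbabilityMeasure P] {G : ℕ → MeasurableSpace Ω}
    {W : ℕ → Ω → S} {γ : Measure S} {Φ : E → S → E} {V : E → ℝ≥0∞} {c : ℝ≥0∞}
    (hG : Monotone G) (hGle : ∀ k, G k ≤ mΩ) (hW : ∀ k, Measurable[G (k + 1)] (W k))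
    (hind : ∀ k, Indep (MeasurableSpace.comap (W k) inferInstance) (G k) P)
    (hlaw : ∀ k, P.map (W k) = γ) (hΦ : Measurable (Function.uncurry Φ)) (hV : Measurable V)
    (hdrift : ∀ z, ∫⁻ w, V (Φ z w) ∂γ ≤ V z + c) (a : E) (n : ℕ) :
    ∫⁻ ω, V (drivenOrbit Φ a (fun j => W j ω) n) ∂P ≤ V a + n * c := by
  induction n with
  | zero => simp [drivenOrbit]
  | succ n ih =>
    set Z : Ω → E := fun ω => drivenOrbit Φ a (fun j => W j ω) n
    have hZG : Measurable[G n] Z := measurable_drivenOrbit hΦ hG hW a n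
    have hZW : IndepFun Z (W n) P :=
      (IndepFun_iff_Indep _ _ _).2 (indep_of_indep_of_le_left (hind n).symm hZG.comap_le)
    calc ∫⁻ ω, V (Φ (Z ω) (W n ω)) ∂P
        = ∫⁻ ω, ∫⁻ w, V (Φ (Z ω) w) ∂γ ∂P := by
          rw [← hlaw n]
          exact lintegral_comp_of_indepFun (hZG.mono (hGle n) le_rfl)
            ((hW n).mono (hGle _) le_rfl) hZW (f := fun z w => V (Φ z w)) (hV.comp hΦ)
      _ ≤ ∫⁻ ω, (V (Z ω) + c) ∂P := lintegral_mono fun ω => hdrift (Z ω)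
      _ = (∫⁻ ω, V (Z ω) ∂P) + c := by simp [lintegral_add_right]
      _ ≤ V a + n * c + c := by gcongr
      _ = V a + (n + 1 : ℕ) * c := by push_cast; ring

end DrivenOrbit

lemma measure_le_of_forall_eventually_mem {Ω : Type*} [MeasurableSpace Ω] {μ : Measure Ω}
    {S : Set Ω} {H : ℕ → Set Ω} {c : ℝ≥0∞} (hS : ∀ ω ∈ S, ∀ᶠ n in atTop, ω ∈ H n)
    (hH : ∃ᶠ n in atTop, μ (H n) ≤ c) : μ S ≤ c := by
  have hsub : S ⊆ ⋃ N, ⋂ n ≥ N, H n := fun ω hω =>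
    mem_iUnion.2 ((eventually_atTop.1 (hS ω hω)).imp fun _ => mem_iInter₂.2)
  have hmono : Monotone fun N => ⋂ n ≥ N, H n := fun N M hNM =>
    biInter_subset_biInter_left fun n hn => le_trans hNM hn
  refine (measure_mono hsub).trans (hmono.measure_iUnion.trans_le (iSup_le fun N => ?_))
  obtain ⟨n, hn, hc⟩ := frequently_atTop.1 hH N
  exact (measure_mono (biInter_subset_of_mem hn)).trans hc

section GaussianMoments

lemma integrable_pow_gaussianReal (μ : ℝ) (v : ℝ≥0) (n : ℕ) :
    Integrable (fun x => x ^ n) (gaussianReal μ v) := by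
  rw [← integrable_norm_iff (by fun_prop)]
  simpa [norm_pow] using
    (memLp_id_gaussianReal (μ := μ) (v := v) (n : ℝ≥0)).integrable_norm_pow'

lemma integral_pow_gaussianReal_zero (v : ℝ≥0) (n : ℕ) :
    ∫ x, x ^ n ∂gaussianReal 0 v = √v ^ n * ∫ x, x ^ n ∂gaussianReal 0 1 := by
  have hv : (.mk (√v ^ 2) (sq_nonneg _) * 1 : ℝ≥0) = v := by
    ext
    simp
  have hmap : (gaussianReal 0 1).map (√v * ·) = gaussianReal 0 v := by
    rw [gaussianReal_map_const_mul, mul_zero, hv]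
  rw [← hmap, integral_map (by fun_prop) (by fun_prop)]
  simp_rw [mul_pow]
  exact integral_const_mul _ _

lemma integral_sq_gaussianReal_zero (v : ℝ≥0) : ∫ x, x ^ 2 ∂gaussianReal 0 v = v := by
  have hvar := variance_id_gaussianReal (μ := 0) (v := v)
  rw [variance_eq_integral (by fun_prop)] at hvar
  simpa [integral_id_gaussianReal] using hvar

lemma lintegral_ofReal_gaussianReal_zero_le {f : ℝ → ℝ} (hf : ∀ w, 0 ≤ f w) {α β κ θ : ℝ}
    (hle : ∀ w, f w ≤ α + β * w + κ * w ^ 2 + θ * w ^ 4) (v : ℝ≥0) :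
    ∫⁻ w, ENNReal.ofReal (f w) ∂gaussianReal 0 v ≤
      ENNReal.ofReal (α + κ * v + θ * (v ^ 2 * ∫ x, x ^ 4 ∂gaussianReal 0 1)) := by
  have hpow (n : ℕ) := integrable_pow_gaussianReal 0 v n
  have h0 : Integrable (fun _ => α) (gaussianReal 0 v) := integrable_const α
  have h1 : Integrable (fun w => β * w) (gaussianReal 0 v) := by
    simpa using (hpow 1).const_mul β
  have h2 := (hpow 2).const_mul κ
  have h4 := (hpow 4).const_mul θ
  have hsqrt : √(v : ℝ) ^ 4 = (v : ℝ) ^ 2 := by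
    calc √(v : ℝ) ^ 4 = (√(v : ℝ) ^ 2) ^ 2 := by ring
      _ = (v : ℝ) ^ 2 := by rw [Real.sq_sqrt v.coe_nonneg]
  calc ∫⁻ w, ENNReal.ofReal (f w) ∂gaussianReal 0 v
      ≤ ∫⁻ w, ENNReal.ofReal (α + β * w + κ * w ^ 2 + θ * w ^ 4) ∂gaussianReal 0 v :=
        lintegral_mono fun w => ENNReal.ofReal_le_ofReal (hle w)
    _ = ENNReal.ofReal (∫ w, (α + β * w + κ * w ^ 2 + θ * w ^ 4) ∂gaussianReal 0 v) :=
        (ofReal_integral_eq_lintegral_ofReal (((h0.add h1).add h2).add h4)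
          (ae_of_all _ fun w => (hf w).trans (hle w))).symm
    _ = _ := by
        rw [integral_add (by exact (h0.add h1).add h2) h4, integral_add (by exact h0.add h1) h2,
          integral_add h0 h1, integral_const_mul, integral_const_mul, integral_const_mul,
          integral_id_gaussianReal, integral_sq_gaussianReal_zero,
          integral_pow_gaussianReal_zero, hsqrt]
        simp

end GaussianMoments

section BesselLyapunov

lemma neg_log_one_add_le {r : ℝ} (hr : -1 / 2 ≤ r) :
    -Real.log (1 + r) ≤ -r + 3 / 4 * r ^ 2 + 8 * r ^ 4 := by
  rcases le_total r (1 / 2) with hr' | hr'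
  · have habs : |r| ≤ 1 / 2 := abs_le.2 ⟨by linarith, hr'⟩
    have htaylor := Real.abs_log_sub_add_sum_range_le (x := -r) (by rw [abs_neg]; linarith) 2
    have hcubic : |r| ^ 3 / (1 - |r|) ≤ r ^ 2 / 4 + 4 * r ^ 4 := by
      calc |r| ^ 3 / (1 - |r|) ≤ |r| ^ 3 / (1 / 2) := by gcongr; linarith
        _ ≤ |r| ^ 2 / 4 + 4 * (|r| ^ 2) ^ 2 := by nlinarith [sq_nonneg (|r| / 2 - 2 * |r| ^ 2)]
        _ = r ^ 2 / 4 + 4 * r ^ 4 := by rw [sq_abs]; ring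
    simp only [Finset.sum_range_succ, Finset.sum_range_zero, abs_neg, sub_neg_eq_add] at htaylor
    have hlog := (abs_le.1 htaylor).1
    norm_num at hlog
    nlinarith [pow_nonneg (sq_nonneg r) 2]
  · have hlog : 0 ≤ Real.log (1 + r) := Real.log_nonneg (by linarith)
    have hcube : (1 / 2) ^ 3 ≤ r ^ 3 := by gcongr
    nlinarith [sq_nonneg r]

lemma neg_log_max_add_le {δ z : ℝ} (hδ : 0 < δ) (hz : δ < z) (d : ℝ) :
    -Real.log (max (z + d) δ) ≤
      -Real.log z - d / z + 3 / 4 * (d / z) ^ 2 + 16 * (d / δ) ^ 4 := by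
  have hz0 : 0 < z := hδ.trans hz
  rcases le_or_gt (-1 / 2) (d / z) with hr | hr
  · have hfactor : z + d = z * (1 + d / z) := by field_simp
    have hlog : Real.log z + Real.log (1 + d / z) ≤ Real.log (max (z + d) δ) := by
      rw [← Real.log_mul hz0.ne' (by linarith), ← hfactor]
      refine Real.log_le_log ?_ (le_max_left _ _)
      rw [hfactor]
      exact mul_pos hz0 (by linarith)
    have hquartic : (d / z) ^ 4 ≤ (d / δ) ^ 4 := by
      rw [div_pow, div_pow]
      gcongr
    linarith [neg_log_one_add_le hr, pow_nonneg (sq_nonneg (d / δ)) 2]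
  · have hd : z < 2 * -d := by
      rw [div_lt_iff₀ hz0] at hr
      linarith
    have hq : 1 / 2 ≤ -d / δ := by
      rw [le_div_iff₀ hδ]
      linarith
    have hlog : Real.log z - Real.log δ ≤ 2 * (-d / δ) := by
      rw [← Real.log_div hz0.ne' hδ.ne', mul_div_assoc']
      calc Real.log (z / δ) ≤ z / δ := Real.log_le_self (by positivity)
        _ ≤ 2 * -d / δ := by gcongr
    have hcube : (1 / 2) ^ 3 ≤ (-d / δ) ^ 3 := by gcongr
    have hquartic : 2 * (-d / δ) ≤ 16 * (d / δ) ^ 4 := by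
      have : (d / δ) ^ 4 = -d / δ * (-d / δ) ^ 3 := by ring
      nlinarith
    have hmax : Real.log δ ≤ Real.log (max (z + d) δ) := Real.log_le_log hδ (le_max_right _ _)
    linarith [sq_nonneg (d / z)]

lemma abs_add_le_add_pow_four {δ z : ℝ} (hδ : 0 < δ) (hδ1 : δ ≤ 1) (hz : δ < z) (d : ℝ) :
    |z + d| ≤ z + d + 2 * (d / δ) ^ 4 := by
  rcases le_total 0 (z + d) with h | h
  · rw [abs_of_nonneg h]
    linarith [pow_nonneg (sq_nonneg (d / δ)) 2]
  · have hq : 1 ≤ -d / δ := by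
      rw [le_div_iff₀ hδ]
      linarith
    have hd : -d ≤ (d / δ) ^ 4 := by
      calc -d ≤ -d / δ := le_div_self (by linarith) hδ hδ1
        _ ≤ (-d / δ) ^ 4 := le_self_pow₀ hq (by norm_num)
        _ = (d / δ) ^ 4 := by ring
    rw [abs_of_nonpos h]
    linarith

/-- The Lyapunov function `|z| - log z` of the Bessel drift `1 / z - K`, with the logarithm cut off
below the level `δ`. -/
def besselLyapunov (δ z : ℝ) : ℝ := |z| - Real.log (max z δ)

lemma measurable_besselLyapunov (δ : ℝ) : Measurable (besselLyapunov δ) := by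
  unfold besselLyapunov
  fun_prop

lemma besselLyapunov_nonneg {δ : ℝ} (hδ : 0 < δ) (hδ1 : δ ≤ 1) (z : ℝ) :
    0 ≤ besselLyapunov δ z := by
  rw [besselLyapunov, sub_nonneg]
  rcases le_total δ z with h | h
  · rw [max_eq_left h, abs_of_pos (hδ.trans_le h)]
    exact Real.log_le_self (hδ.le.trans h)
  · rw [max_eq_right h]
    exact (Real.log_nonpos hδ.le hδ1).trans (abs_nonneg z)

lemma neg_log_le_besselLyapunov {δ z : ℝ} (hz : z ≤ δ) : -Real.log δ ≤ besselLyapunov δ z := by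
  rw [besselLyapunov, max_eq_right hz]
  linarith [abs_nonneg z]

lemma besselLyapunov_add_le {δ z : ℝ} (hδ : 0 < δ) (hδ1 : δ ≤ 1) (hz : δ < z) (d : ℝ) :
    besselLyapunov δ (z + d) ≤ besselLyapunov δ z +
      (1 - 1 / z) * d + 3 / 4 * (1 / z) ^ 2 * d ^ 2 + 18 / δ ^ 4 * d ^ 4 := by
  rw [besselLyapunov, besselLyapunov, max_eq_left hz.le, abs_of_pos (hδ.trans hz)]
  calc |z + d| - Real.log (max (z + d) δ)
      ≤ (z + d + 2 * (d / δ) ^ 4) +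
        (-Real.log z - d / z + 3 / 4 * (d / z) ^ 2 + 16 * (d / δ) ^ 4) :=
        add_le_add (abs_add_le_add_pow_four hδ hδ1 hz d) (neg_log_max_add_le hδ hz d)
    _ = _ := by ring

lemma besselLyapunov_euler_le {K δ : ℝ} (hδ : 0 < δ) (hδ1 : δ ≤ 1) :
    ∃ A, ∀ Δ z : ℝ, 0 ≤ Δ → Δ ≤ 1 → δ < z → ∃ β, ∀ w,
      besselLyapunov δ (z + (1 / z - K) * Δ + w) ≤ besselLyapunov δ z +
        ((1 - 1 / z) * (1 / z - K) * Δ + A * Δ ^ 2) + β * w + 3 / 4 * (1 / z) ^ 2 * w ^ 2 +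
          144 / δ ^ 4 * w ^ 4 := by
  set M := 1 / δ + |K|
  refine ⟨3 / 4 * (1 / δ) ^ 2 * M ^ 2 + 144 / δ ^ 4 * M ^ 4, fun Δ z hΔ hΔ1 hz =>
    ⟨1 - 1 / z + 3 / 2 * (1 / z) ^ 2 * ((1 / z - K) * Δ), fun w => ?_⟩⟩
  have h := besselLyapunov_add_le hδ hδ1 hz ((1 / z - K) * Δ + w)
  have hz0 : 0 < z := hδ.trans hz
  have hp : 1 / z ≤ 1 / δ := one_div_le_one_div_of_le hδ hz.le
  have hdrift : |1 / z - K| ≤ M := by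
    calc |1 / z - K| ≤ |1 / z| + |K| := abs_sub _ _
      _ ≤ M := by rw [abs_of_pos (by positivity)]; exact add_le_add hp le_rfl
  have hsq : (1 / z) ^ 2 * ((1 / z - K) * Δ) ^ 2 ≤ (1 / δ) ^ 2 * (M ^ 2 * Δ ^ 2) := by
    rw [mul_pow, ← sq_abs (1 / z - K)]
    gcongr
  have hquartic : ((1 / z - K) * Δ + w) ^ 4 ≤ 8 * (M ^ 4 * Δ ^ 2) + 8 * w ^ 4 := by
    calc ((1 / z - K) * Δ + w) ^ 4
        ≤ 2 ^ 3 * (((1 / z - K) * Δ) ^ 4 + w ^ 4) := Even.add_pow_le (by decide)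
      _ = 8 * (|1 / z - K| ^ 4 * Δ ^ 4) + 8 * w ^ 4 := by rw [Even.pow_abs (by decide)]; ring
      _ ≤ 8 * (M ^ 4 * Δ ^ 2) + 8 * w ^ 4 := by
        gcongr ?_ * (?_ * ?_) + _
        · gcongr
        · exact pow_le_pow_of_le_one hΔ hΔ1 (by norm_num)
  have hquartic' := mul_le_mul_of_nonneg_left hquartic (by positivity : 0 ≤ 18 / δ ^ 4)
  rw [← add_assoc] at h
  linear_combination h + 3 / 4 * hsq + hquartic'

/-- One Euler step, with step size `Δ` and noise `w`, for the drift `1 / z - K`; points `z ≤ δ` are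
absorbing. -/
def besselStep (K δ Δ z w : ℝ) : ℝ := if z ≤ δ then z else z + (1 / z - K) * Δ + w

lemma measurable_besselStep (K δ Δ : ℝ) :
    Measurable (Function.uncurry (besselStep K δ Δ)) := by
  unfold besselStep Function.uncurry
  exact Measurable.ite (measurableSet_le measurable_fst measurable_const) (by fun_prop)
    (by fun_prop)

-- With `p = 1 / z`, the generator of `dz = (p - K) dt + dw` maps `z - log z` to
-- `(1 - p) * (p - K) + p ^ 2 / 2`, whose leading term `- p ^ 2 / 2` makes it bounded above.
lemma eventually_lintegral_besselLyapunov_besselStep_le (K : ℝ) {δ : ℝ} (hδ : 0 < δ)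
    (hδ1 : δ ≤ 1) :
    ∀ᶠ Δ in 𝓝[≥] (0 : ℝ), ∀ z,
      ∫⁻ w, ENNReal.ofReal (besselLyapunov δ (besselStep K δ Δ z w)) ∂gaussianReal 0 Δ.toNNReal ≤
        ENNReal.ofReal (besselLyapunov δ z) + ENNReal.ofReal ((K ^ 2 + K + 2) * Δ) := by
  obtain ⟨A, hA⟩ := besselLyapunov_euler_le (K := K) hδ hδ1
  set m := ∫ x, x ^ 4 ∂gaussianReal 0 1
  have hsmall : ∀ᶠ Δ in 𝓝[≥] (0 : ℝ), (A + 144 / δ ^ 4 * m) * Δ < 1 := by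
    have hcont : Continuous fun Δ => (A + 144 / δ ^ 4 * m) * Δ := by fun_prop
    exact nhdsWithin_le_nhds (hcont.tendsto' 0 0 (by simp) |>.eventually_lt_const one_pos)
  have hone : ∀ᶠ Δ in 𝓝[≥] (0 : ℝ), Δ ≤ 1 :=
    nhdsWithin_le_nhds (eventually_le_nhds one_pos)
  filter_upwards [hsmall, hone, self_mem_nhdsWithin] with Δ hΔA hΔ1 (hΔ : 0 ≤ Δ) z
  rcases le_or_gt z δ with hz | hz
  · simp [besselStep, hz]
  obtain ⟨β, hβ⟩ := hA Δ z hΔ hΔ1 hz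
  have hgauss := lintegral_ofReal_gaussianReal_zero_le (fun w => besselLyapunov_nonneg hδ hδ1 _)
    hβ Δ.toNNReal
  simp only [besselStep, if_neg hz.not_ge]
  refine hgauss.trans ((ENNReal.ofReal_le_ofReal ?_).trans ENNReal.ofReal_add_le)
  have hgen : (1 - 1 / z) * (1 / z - K) + 3 / 4 * (1 / z) ^ 2 ≤ K ^ 2 + K + 1 := by
    nlinarith [sq_nonneg (1 / z - 2 * (1 + K)), sq_nonneg (1 / z)]
  rw [Real.coe_toNNReal _ hΔ]
  nlinarith [mul_le_mul_of_nonneg_right hgen hΔ, mul_le_mul_of_nonneg_right hΔA.le hΔ]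

end BesselLyapunov

section BrownianOrbits

/-- The increments of the path `w` over consecutive intervals of length `Δ`, starting at time `s`;
they are the noise that drives Euler schemes. -/
def increments (w : ℝ → ℝ) (s Δ : ℝ) (k : ℕ) : ℝ := w (s + (k + 1 : ℕ) * Δ) - w (s + k * Δ)

variable {Ω : Type*} [m : MeasurableSpace Ω] {P : Measure Ω} [IsProbabilityMeasure P]
  {F : ℝ → MeasurableSpace Ω} {B : ℝ → Ω → ℝ}

lemma IsBrownian.lintegral_drivenOrbit_increments_le {E : Type*} [MeasurableSpace E] {Φ : E → ℝ → E}
    {V : E → ℝ≥0∞} {c : ℝ≥0∞} {s Δ : ℝ} (hB : IsBrownian F P B)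
    (hFle : ∀ t, 0 ≤ t → F t ≤ m) (hFmono : ∀ s t : ℝ, 0 ≤ s → s ≤ t → F s ≤ F t)
    (hs : 0 ≤ s) (hΔ : 0 ≤ Δ) (hΦ : Measurable (Function.uncurry Φ)) (hV : Measurable V)
    (hdrift : ∀ z, ∫⁻ w, V (Φ z w) ∂gaussianReal 0 Δ.toNNReal ≤ V z + c) (a : E) (n : ℕ) :
    ∫⁻ ω, V (drivenOrbit Φ a (increments (fun t => B t ω) s Δ) n) ∂P ≤ V a + n * c := by
  obtain ⟨-, -, hmeas, hindep, hlaw⟩ := hB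
  have hpos (k : ℕ) : 0 ≤ s + k * Δ := by positivity
  have hle {k l : ℕ} (hkl : k ≤ l) : s + k * Δ ≤ s + l * Δ := by gcongr
  refine lintegral_drivenOrbit_le (G := fun k : ℕ => F (s + k * Δ))
    (W := fun k ω => increments (fun t => B t ω) s Δ k)
    (fun k l hkl => hFmono _ _ (hpos k) (hle hkl)) (fun k => hFle _ (hpos k))
    (fun k => (hmeas _ (hpos _)).sub
      ((hmeas _ (hpos k)).mono (hFmono _ _ (hpos k) (hle k.le_succ)) le_rfl))
    (fun k => hindep _ _ (hpos k) (hle k.le_succ)) (fun k => ?_) hΦ hV hdrift a n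
  refine (hlaw _ _ (hpos k) (hle k.le_succ)).trans ?_
  congr 2
  push_cast
  ring

lemma IsBrownian.eventually_lintegral_besselLyapunov_drivenOrbit_le (hB : IsBrownian F P B)
    (hFle : ∀ t, 0 ≤ t → F t ≤ m) (hFmono : ∀ s t : ℝ, 0 ≤ s → s ≤ t → F s ≤ F t)
    {s a δ : ℝ} (hs : 0 ≤ s) (ha : 0 < a) (hδ : 0 < δ) (hδ1 : δ ≤ 1) (K : ℝ) :
    ∀ᶠ n : ℕ in atTop,
      ∫⁻ ω, ENNReal.ofReal (besselLyapunov δ (drivenOrbit (besselStep K δ (1 / n)) a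
        (increments (fun t => B t ω) s (1 / n)) n)) ∂P ≤
        ENNReal.ofReal (a - Real.log a + (K ^ 2 + K + 2)) := by
  have hmesh : Tendsto (fun n : ℕ => 1 / (n : ℝ)) atTop (𝓝[≥] 0) :=
    tendsto_nhdsWithin_iff.2 ⟨tendsto_one_div_atTop_nhds_zero_nat, .of_forall fun n => by simp⟩
  filter_upwards [hmesh.eventually (eventually_lintegral_besselLyapunov_besselStep_le K hδ hδ1),
    eventually_gt_atTop 0] with n hstep hn
  have hn' : (n : ℝ) ≠ 0 := by positivity
  have ha' : besselLyapunov δ a ≤ a - Real.log a := by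
    rw [besselLyapunov, abs_of_pos ha]
    gcongr
    exact le_max_left a δ
  have hK : 0 ≤ K ^ 2 + K + 2 := by nlinarith [sq_nonneg (K + 1)]
  refine (hB.lintegral_drivenOrbit_increments_le hFle hFmono hs (by positivity)
    (measurable_besselStep K δ (1 / n)) (measurable_besselLyapunov δ).ennreal_ofReal hstep
    a n).trans ?_
  calc ENNReal.ofReal (besselLyapunov δ a) + n * ENNReal.ofReal ((K ^ 2 + K + 2) * (1 / n))
      ≤ ENNReal.ofReal (a - Real.log a) + ENNReal.ofReal (K ^ 2 + K + 2) := by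
        rw [← ENNReal.ofReal_natCast n, ← ENNReal.ofReal_mul (by positivity)]
        gcongr
        field_simp
        rfl
    _ = ENNReal.ofReal (a - Real.log a + (K ^ 2 + K + 2)) :=
        (ENNReal.ofReal_add (by linarith [Real.log_le_self ha.le]) hK).symm

lemma IsBrownian.eventually_measure_drivenOrbit_besselStep_le (hB : IsBrownian F P B)
    (hFle : ∀ t, 0 ≤ t → F t ≤ m) (hFmono : ∀ s t : ℝ, 0 ≤ s → s ≤ t → F s ≤ F t)
    {s a δ : ℝ} (hs : 0 ≤ s) (ha : 0 < a) (hδ : 0 < δ) (hδ1 : δ < 1) (K : ℝ) :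
    ∀ᶠ n : ℕ in atTop,
      P {ω | drivenOrbit (besselStep K δ (1 / n)) a (increments (fun t => B t ω) s (1 / n)) n ≤ δ} ≤
        ENNReal.ofReal (a - Real.log a + (K ^ 2 + K + 2)) / ENNReal.ofReal (-Real.log δ) := by
  filter_upwards [hB.eventually_lintegral_besselLyapunov_drivenOrbit_le hFle hFmono hs ha hδ
    hδ1.le K] with n hmean
  have hlog : 0 < -Real.log δ := neg_pos.2 (Real.log_neg hδ hδ1)
  have hnoise (k : ℕ) : Measurable fun ω => increments (fun t => B t ω) s (1 / n) k := by
    have hBm (t : ℝ) (ht : 0 ≤ t) : Measurable (B t) := (hB.2.2.1 t ht).mono (hFle t ht) le_rfl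
    exact (hBm _ (by positivity)).sub (hBm _ (by positivity))
  have horbit := measurable_drivenOrbit (G := fun _ => m) (measurable_besselStep K δ (1 / n))
    monotone_const hnoise a n
  have hV := ((measurable_besselLyapunov δ).comp horbit).ennreal_ofReal
  calc P {ω | drivenOrbit (besselStep K δ (1 / n)) a (increments (fun t => B t ω) s (1 / n)) n ≤ δ}
      ≤ P {ω | ENNReal.ofReal (-Real.log δ) ≤ ENNReal.ofReal (besselLyapunov δ
          (drivenOrbit (besselStep K δ (1 / n)) a (increments (fun t => B t ω) s (1 / n)) n))} :=
        measure_mono fun ω hω => ENNReal.ofReal_le_ofReal (neg_log_le_besselLyapunov hω)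
    _ ≤ _ := meas_ge_le_lintegral_div hV.aemeasurable (by simpa using hlog) (by simp)
    _ ≤ _ := ENNReal.div_le_div_right hmean _

end BrownianOrbits

section SolvesOn

/-- `x` solves the integral equation `dx = f dt + dw` on `[s, v)`; the path `w` need not be
differentiable and no regularity is asked of `f` beyond integrability away from `v`. -/
def SolvesOn (f x w : ℝ → ℝ) (s v : ℝ) : Prop :=
  ∀ ⦃r t⦄, s ≤ r → r ≤ t → t < v →
    IntervalIntegrable f volume r t ∧ x t - x r = (∫ u in r..t, f u) + (w t - w r)

variable {f x w : ℝ → ℝ} {s v : ℝ}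

lemma SolvesOn.of_initial
    (h : ∀ t ∈ Ico s v, IntegrableOn f (Icc s t) ∧ x t = (∫ u in s..t, f u) + w t) :
    SolvesOn f x w s v := by
  intro r t hr hrt ht
  obtain ⟨hir, hxr⟩ := h r ⟨hr, hrt.trans_lt ht⟩
  obtain ⟨hit, hxt⟩ := h t ⟨hr.trans hrt, ht⟩
  have hr' : IntervalIntegrable f volume s r :=
    (intervalIntegrable_iff_integrableOn_Icc_of_le hr).2 hir
  have ht' : IntervalIntegrable f volume s t :=
    (intervalIntegrable_iff_integrableOn_Icc_of_le (hr.trans hrt)).2 hit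
  refine ⟨hr'.symm.trans ht', ?_⟩
  rw [hxr, hxt, ← intervalIntegral.integral_interval_sub_left ht' hr']
  ring

lemma SolvesOn.neg (h : SolvesOn f x w s v) :
    SolvesOn (fun u => -f u) (fun u => -x u) (fun u => -w u) s v := by
  intro r t hr hrt ht
  obtain ⟨hint, heq⟩ := h hr hrt ht
  refine ⟨hint.neg, ?_⟩
  rw [intervalIntegral.integral_neg]
  linarith

lemma SolvesOn.mono (h : SolvesOn f x w s v) {r t : ℝ} (hr : s ≤ r) (ht : t ≤ v) :
    SolvesOn f x w r t :=
  fun _ _ hp hpq hq => h (hr.trans hp) hpq (hq.trans_le ht)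

lemma SolvesOn.le_sub (h : SolvesOn f x w s v) {r t c : ℝ} (hr : s ≤ r) (hrt : r ≤ t) (ht : t < v)
    (hc : ∀ u ∈ Icc r t, c ≤ f u) : c * (t - r) + (w t - w r) ≤ x t - x r := by
  obtain ⟨hint, heq⟩ := h hr hrt ht
  have hmono := intervalIntegral.integral_mono_on hrt (intervalIntegrable_const (c := c)) hint hc
  rw [intervalIntegral.integral_const, smul_eq_mul] at hmono
  linarith

end SolvesOn

section BesselHit

/-- The path `x`, driven by `w` with a drift that is at least `1 / x - K`, is positive on `[s, v)`
and hits `0` at time `v`. -/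
structure IsBesselHit (K : ℝ) (w x f : ℝ → ℝ) (s v : ℝ) : Prop where
  lt : s < v
  continuous : Continuous x
  solves : SolvesOn f x w s v
  pos : ∀ u ∈ Ico s v, 0 < x u
  le_drift : ∀ u ∈ Ico s v, 1 / x u - K ≤ f u
  eq_zero : x v = 0

variable {K δ : ℝ} {w x f : ℝ → ℝ} {s v : ℝ}

lemma IsBesselHit.mono (h : IsBesselHit K w x f s v) {K' s' : ℝ} (hK : K ≤ K') (hs : s ≤ s')
    (hv : s' < v) : IsBesselHit K' w x f s' v where
  lt := hv
  continuous := h.continuous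
  solves := h.solves.mono hs le_rfl
  pos u hu := h.pos u ⟨hs.trans hu.1, hu.2⟩
  le_drift u hu := (sub_le_sub_left hK _).trans (h.le_drift u ⟨hs.trans hu.1, hu.2⟩)
  eq_zero := h.eq_zero

lemma one_div_sub_one_div_le {z x : ℝ} (hδ : 0 < δ) (hz : δ < z) (hx : 0 < x) :
    1 / z - 1 / x ≤ max (x - z) 0 / δ ^ 2 := by
  have hz0 : 0 < z := hδ.trans hz
  rcases le_total x z with h | h
  · rw [max_eq_right (by linarith), zero_div, sub_nonpos]
    exact one_div_le_one_div_of_le hx h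
  · rw [max_eq_left (by linarith)]
    calc 1 / z - 1 / x = (x - z) / (z * x) := by field_simp
      _ ≤ (x - z) / δ ^ 2 := by
        rw [sq]
        have : δ ≤ x := hz.le.trans h
        gcongr

lemma IsBesselHit.besselStep_sub_le (h : IsBesselHit K w x f s v) (hδ : 0 < δ) {z r t ε : ℝ}
    (hz : δ < z) (hr : s ≤ r) (hrt : r ≤ t) (ht : t < v) (hmesh : t - r ≤ δ ^ 2)
    (hosc : ∀ u ∈ Icc r t, x u ≤ x r + ε) :
    besselStep K δ (t - r) z (w t - w r) - x t ≤ max (z - x r) 0 + (t - r) * (ε / δ ^ 2) := by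
  have hε : 0 ≤ ε := by linarith [hosc r ⟨le_rfl, hrt⟩]
  set q := max (x r - z) 0
  have hdrift : ∀ u ∈ Icc r t, 1 / z - K - (q + ε) / δ ^ 2 ≤ f u := by
    intro u hu
    have hu' : u ∈ Ico s v := ⟨hr.trans hu.1, hu.2.trans_lt ht⟩
    have hmax : max (x u - z) 0 ≤ q + ε :=
      max_le (by linarith [hosc u hu, le_max_left (x r - z) 0]) (by positivity)
    have hdiv : max (x u - z) 0 / δ ^ 2 ≤ (q + ε) / δ ^ 2 := by gcongr
    linarith [h.le_drift u hu', one_div_sub_one_div_le hδ hz (h.pos u hu')]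
  have hinc := h.solves.le_sub hr hrt ht hdrift
  have hq : q / δ ^ 2 * (t - r) ≤ q := by
    rw [div_mul_eq_mul_div]
    exact div_le_of_le_mul₀ (by positivity) (by positivity) (by gcongr)
  have hpart : z - x r + q = max (z - x r) 0 := by
    rw [← max_add_add_left]
    simp [max_comm]
  rw [besselStep, if_neg hz.not_ge, ← hpart]
  linear_combination hinc + hq

lemma IsBesselHit.drivenOrbit_le_or_sub_le (h : IsBesselHit K w x f s v) (hδ : 0 < δ) {a Δ ε : ℝ}
    (ha : a ≤ x s) (hΔ : 0 ≤ Δ) (hmesh : Δ ≤ δ ^ 2) (hε : 0 ≤ ε)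
    (hosc : ∀ r ∈ Icc s v, ∀ u ∈ Icc s v, |u - r| ≤ Δ → x u ≤ x r + ε) (k : ℕ)
    (hk : s + k * Δ < v) :
    drivenOrbit (besselStep K δ Δ) a (increments w s Δ) k ≤ δ ∨
      drivenOrbit (besselStep K δ Δ) a (increments w s Δ) k - x (s + k * Δ) ≤
        k * Δ * (ε / δ ^ 2) := by
  induction k with
  | zero => right; simpa [drivenOrbit] using ha
  | succ k ih =>
    simp only [drivenOrbit]
    set z := drivenOrbit (besselStep K δ Δ) a (increments w s Δ) k
    have hsucc : s + (k + 1 : ℕ) * Δ = s + k * Δ + Δ := by push_cast; ring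
    have hr : s ≤ s + k * Δ := by linarith [mul_nonneg k.cast_nonneg hΔ]
    rcases le_or_gt z δ with hz | hz
    · left
      simp [besselStep, hz]
    right
    have hlt : s + k * Δ < v := by linarith
    have hbound : z - x (s + k * Δ) ≤ k * Δ * (ε / δ ^ 2) := (ih hlt).resolve_left hz.not_ge
    have hstep := h.besselStep_sub_le hδ (t := s + (k + 1 : ℕ) * Δ) hz hr (by linarith) hk
      (by linarith) fun u hu => hosc _ ⟨hr, hlt.le⟩ u ⟨hr.trans hu.1, hu.2.trans hk.le⟩
        (abs_le.2 ⟨by linarith [hu.1], by linarith [hu.2]⟩)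
    rw [show s + (k + 1 : ℕ) * Δ - (s + k * Δ) = Δ by linarith] at hstep
    calc besselStep K δ Δ z (increments w s Δ k) - x (s + (k + 1 : ℕ) * Δ)
        ≤ max (z - x (s + k * Δ)) 0 + Δ * (ε / δ ^ 2) := hstep
      _ ≤ k * Δ * (ε / δ ^ 2) + Δ * (ε / δ ^ 2) := by
        gcongr
        exact max_le hbound (by positivity)
      _ = (k + 1 : ℕ) * Δ * (ε / δ ^ 2) := by push_cast; ring

lemma drivenOrbit_besselStep_le_of_le {Δ a : ℝ} {W : ℕ → ℝ} {k n : ℕ} (hkn : k ≤ n)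
    (hk : drivenOrbit (besselStep K δ Δ) a W k ≤ δ) :
    drivenOrbit (besselStep K δ Δ) a W n ≤ δ := by
  induction n, hkn using Nat.le_induction with
  | base => exact hk
  | succ n _ ih => simp [drivenOrbit, besselStep, ih]

lemma exists_nat_mul_lt_le {Δ l : ℝ} (hΔ : 0 < Δ) (hl : 0 < l) :
    ∃ k : ℕ, k * Δ < l ∧ l ≤ (k + 1) * Δ := by
  obtain ⟨k, hk⟩ := Nat.exists_eq_succ_of_ne_zero (Nat.ceil_pos.2 (div_pos hl hΔ)).ne'
  obtain ⟨hlt, hle⟩ := (Nat.ceil_eq_iff k.succ_ne_zero).1 hk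
  refine ⟨k, (lt_div_iff₀ hΔ).1 hlt, (div_le_iff₀ hΔ).1 ?_⟩
  exact_mod_cast hle

lemma IsBesselHit.eventually_drivenOrbit_le (h : IsBesselHit K w x f s v) (hδ : 0 < δ) {a : ℝ}
    (ha : a ≤ x s) (hv : v ≤ s + 1) :
    ∀ᶠ n : ℕ in atTop,
      drivenOrbit (besselStep K δ (1 / n)) a (increments w s (1 / n)) n ≤ δ := by
  obtain ⟨η, hη, hosc⟩ := Metric.uniformContinuousOn_iff.1
    ((isCompact_Icc (a := s) (b := v)).uniformContinuousOn_of_continuous h.continuous.continuousOn)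
    (δ ^ 3 / 2) (by positivity)
  obtain ⟨θ, hθ, hnear⟩ := Metric.eventually_nhds_iff.1 <|
    (h.continuous.tendsto' v 0 h.eq_zero).eventually_lt_const (half_pos hδ)
  have hmesh := tendsto_one_div_atTop_nhds_zero_nat (𝕜 := ℝ)
  filter_upwards [hmesh.eventually_lt_const hη, hmesh.eventually_lt_const hθ,
    hmesh.eventually_lt_const (pow_pos hδ 2), eventually_gt_atTop 0] with n hnη hnθ hnδ hn
  have hn' : (0 : ℝ) < n := by positivity
  obtain ⟨k, hkv, hvk⟩ := exists_nat_mul_lt_le (one_div_pos.2 hn') (sub_pos.2 h.lt)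
  have hkn : (k : ℝ) * (1 / n) ≤ 1 := by linarith
  have hxt : x (s + k * (1 / n)) < δ / 2 := by
    refine hnear ?_
    rw [Real.dist_eq, abs_lt]
    constructor <;> linarith
  have hkn' : k ≤ n := by
    rw [mul_one_div, div_le_one hn'] at hkn
    exact_mod_cast hkn
  refine drivenOrbit_besselStep_le_of_le hkn' ?_
  refine (h.drivenOrbit_le_or_sub_le hδ ha (by positivity) hnδ.le (ε := δ ^ 3 / 2) (by positivity)
    (fun r hr u hu hru => ?_) k (by linarith)).elim id fun hle => ?_
  · have hdist := (hosc u hu r hr (hru.trans_lt hnη)).le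
    rw [Real.dist_eq] at hdist
    linarith [le_abs_self (x u - x r)]
  · have : δ ^ 3 / 2 / δ ^ 2 = δ / 2 := by field_simp
    rw [this] at hle
    nlinarith

/-- No path driven by `w` with a drift bounded below by a Bessel drift `1 / x - K` can hit `0`. -/
def IsBesselRepelling (w : ℝ → ℝ) : Prop :=
  ∀ ⦃K : ℝ⦄ ⦃x f : ℝ → ℝ⦄ ⦃s v : ℝ⦄, 0 ≤ s → ¬IsBesselHit K w x f s v

end BesselHit

section BrownianPaths

variable {Ω : Type*} [m : MeasurableSpace Ω] {P : Measure Ω} {F : ℝ → MeasurableSpace Ω}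
  {B : ℝ → Ω → ℝ}

lemma IsBrownian.aemeasurable_sub (hB : IsBrownian F P B) {s t : ℝ} (hs : 0 ≤ s) (hst : s ≤ t) :
    AEMeasurable (fun ω => B t ω - B s ω) P := by
  have := hB.2.2.2.2 s t hs hst
  refine aemeasurable_of_map_neZero ?_
  rw [this]
  infer_instance

lemma IsBrownian.neg (hB : IsBrownian F P B) : IsBrownian F P (fun t ω => -B t ω) := by
  have hsub (s t : ℝ) : (fun ω => -B t ω - -B s ω) = Neg.neg ∘ fun ω => B t ω - B s ω := by
    ext ω
    simp only [Function.comp_apply]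
    ring
  refine ⟨fun ω => (hB.1 ω).neg, hB.2.1.mono fun ω h => by simp [h],
    fun t ht => (hB.2.2.1 t ht).neg, fun s t hs hst => ?_, fun s t hs hst => ?_⟩
  · rw [hsub, ← MeasurableSpace.comap_comp]
    exact indep_of_indep_of_le_left (hB.2.2.2.1 s t hs hst)
      (MeasurableSpace.comap_mono measurable_neg.comap_le)
  · rw [hsub, ← AEMeasurable.map_map_of_aemeasurable measurable_neg.aemeasurable
      (hB.aemeasurable_sub hs hst), hB.2.2.2.2 s t hs hst]
    simpa using gaussianReal_map_neg (μ := 0) (v := (t - s).toNNReal)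

lemma IsBrownian.ae_ne (hB : IsBrownian F P B) {s t : ℝ} (hs : 0 ≤ s) (hst : s < t) :
    ∀ᵐ ω ∂P, B t ω ≠ B s ω := by
  have := nullSingletonClass_gaussianReal (μ := 0)
    (Real.toNNReal_pos.2 (sub_pos.2 hst)).ne'
  have hne : ∀ᵐ z ∂P.map fun ω => B t ω - B s ω, z ≠ 0 := by
    rw [hB.2.2.2.2 s t hs hst.le]
    exact compl_mem_ae_iff.2 (measure_singleton (0 : ℝ))
  filter_upwards [ae_of_ae_map (hB.aemeasurable_sub hs hst.le) hne] with ω hω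
  exact sub_ne_zero.1 hω

lemma IsBrownian.ae_frequently_ne (hB : IsBrownian F P B) {s : ℝ} (hs : 0 ≤ s) :
    ∀ᵐ ω ∂P, ∃ᶠ t in 𝓝[>] s, B t ω ≠ B s ω := by
  have hlim : Tendsto (fun n : ℕ => s + 1 / ((n : ℝ) + 1)) atTop (𝓝[>] s) := by
    refine tendsto_nhdsWithin_iff.2 ⟨?_, .of_forall fun n => ?_⟩
    · simpa using tendsto_one_div_add_atTop_nhds_zero_nat.const_add s
    · exact lt_add_of_pos_right s (by positivity)
  have hne : ∀ᵐ ω ∂P, ∀ n : ℕ, B (s + 1 / ((n : ℝ) + 1)) ω ≠ B s ω :=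
    ae_all_iff.2 fun n => hB.ae_ne hs (lt_add_of_pos_right s (by positivity))
  filter_upwards [hne] with ω hω
  exact hlim.frequently (.of_forall hω)

variable [IsProbabilityMeasure P]

lemma IsBrownian.ae_forall_not_isBesselHit (hB : IsBrownian F P B)
    (hFle : ∀ t, 0 ≤ t → F t ≤ m) (hFmono : ∀ s t : ℝ, 0 ≤ s → s ≤ t → F s ≤ F t)
    {s a : ℝ} (hs : 0 ≤ s) (ha : 0 < a) (K : ℝ) :
    ∀ᵐ ω ∂P, ∀ x f v, v ≤ s + 1 → a ≤ x s → ¬IsBesselHit K (fun t => B t ω) x f s v := by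
  set C := ENNReal.ofReal (a - Real.log a + (K ^ 2 + K + 2))
  have hlim : Tendsto (fun δ => C / ENNReal.ofReal (-Real.log δ)) (𝓝[>] (0 : ℝ)) (𝓝 0) := by
    have hlog := ENNReal.tendsto_ofReal_atTop.comp
      (tendsto_neg_atBot_atTop.comp Real.tendsto_log_nhdsGT_zero)
    simpa using ENNReal.Tendsto.const_div hlog (.inr ENNReal.ofReal_ne_top)
  refine le_antisymm (ge_of_tendsto hlim ?_) zero_le
  filter_upwards [Ioo_mem_nhdsGT one_pos] with δ hδ
  refine measure_le_of_forall_eventually_mem (fun ω hω => ?_)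
    (hB.eventually_measure_drivenOrbit_besselStep_le hFle hFmono hs ha hδ.1 hδ.2 K).frequently
  simp only [mem_compl_iff, mem_ofPred_eq] at hω
  push Not at hω
  obtain ⟨x, f, v, hv, hax, hhit⟩ := hω
  exact hhit.eventually_drivenOrbit_le hδ.1 hax hv

lemma IsBrownian.ae_isBesselRepelling (hB : IsBrownian F P B)
    (hFle : ∀ t, 0 ≤ t → F t ≤ m) (hFmono : ∀ s t : ℝ, 0 ≤ s → s ≤ t → F s ≤ F t) :
    ∀ᵐ ω ∂P, IsBesselRepelling fun t => B t ω := by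
  have hrat : ∀ᵐ ω ∂P, ∀ q : ℚ, 0 ≤ (q : ℝ) → ∀ (j k : ℕ) x f v, v ≤ (q : ℝ) + 1 →
      1 / ((j : ℝ) + 1) ≤ x q → ¬IsBesselHit k (fun t => B t ω) x f q v :=
    ae_all_iff.2 fun q => ae_all_iff.2 fun hq => ae_all_iff.2 fun j => ae_all_iff.2 fun k =>
      hB.ae_forall_not_isBesselHit hFle hFmono hq (by positivity) k
  filter_upwards [hrat] with ω hω K x f s v hs h
  obtain ⟨q, hsq, hqv⟩ := exists_rat_btwn (max_lt h.lt (sub_one_lt v))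
  rw [max_lt_iff] at hsq
  obtain ⟨j, hj⟩ := exists_nat_one_div_lt (h.pos q ⟨hsq.1.le, hqv⟩)
  obtain ⟨k, hk⟩ := exists_nat_ge K
  exact hω q (hs.trans hsq.1.le) j k x f v (by linarith) hj.le (h.mono hk hsq.1.le hqv)

end BrownianPaths

section BesselBridge

lemma exists_first_zero {x : ℝ → ℝ} (hx : Continuous x) {s t : ℝ} (hst : s ≤ t) (hs : 0 < x s)
    (ht : x t ≤ 0) : ∃ v ∈ Ioc s t, x v = 0 ∧ ∀ u ∈ Ico s v, 0 < x u := by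
  have hcompact : IsCompact (Icc s t ∩ x ⁻¹' {0}) :=
    isCompact_Icc.inter_right (isClosed_singleton.preimage hx)
  have hzero {r : ℝ} (hsr : s ≤ r) (hr : x r ≤ 0) : ∃ v ∈ Icc s r, x v = 0 :=
    intermediate_value_Icc' hsr hx.continuousOn ⟨hr, hs.le⟩
  obtain ⟨v, ⟨hv, hxv : x v = 0⟩, hmin⟩ := hcompact.exists_isLeast (hzero hst ht)
  have hsv : s ≠ v := by
    rintro rfl
    exact hs.ne' hxv
  refine ⟨v, ⟨hv.1.lt_of_ne hsv, hv.2⟩, hxv, fun u hu => ?_⟩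
  by_contra! hxu
  obtain ⟨r, hr, hxr⟩ := hzero hu.1 hxu
  exact ((hmin ⟨⟨hr.1, hr.2.trans (hu.2.le.trans hv.2)⟩, hxr⟩).trans hr.2).not_gt hu.2

lemma bBridge_of_pos {x : ℝ} (hx : 0 < x) (y t : ℝ) :
    bBridge y t x = (y - x) / (1 - t) + 1 / x :=
  if_pos hx

lemma bBridge_zero (y t : ℝ) : bBridge y t 0 = 0 := by simp [bBridge]

lemma bBridge_neg (y t x : ℝ) : bBridge y t (-x) = -bBridge y t x := by
  unfold bBridge
  rcases lt_trichotomy x 0 with h | rfl | h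
  · rw [if_pos (by linarith), if_neg (by linarith), if_pos h, div_neg]
    ring
  · simp
  · rw [if_neg (by linarith), if_pos (by linarith), if_pos h, div_neg]
    ring

variable {f x w : ℝ → ℝ} {y s v : ℝ}

lemma SolvesOn.frequently_ne_zero (h : SolvesOn f x w s v) (hsv : s < v) (hx : Continuous x)
    (hf : ∀ u, x u = 0 → f u = 0) (hw : ∃ᶠ u in 𝓝[>] s, w u ≠ w s) :
    ∃ᶠ u in 𝓝[>] s, x u ≠ 0 := by
  by_contra! hzero
  obtain ⟨l, hl, hxl⟩ := mem_nhdsGT_iff_exists_Ioo_subset.1 hzero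
  have hxs : x s = 0 := tendsto_nhds_unique (hx.continuousWithinAt (s := Ioi s))
    (tendsto_const_nhds.congr' (hzero.mono fun u hu => hu.symm))
  obtain ⟨u, hwu, hsu, hu⟩ := (hw.and_eventually (Ioo_mem_nhdsGT (lt_min hl hsv))).exists
  rw [lt_min_iff] at hu
  have hint : ∫ r in s..u, f r = 0 := by
    refine (intervalIntegral.integral_congr fun r hr => hf r ?_).trans
      intervalIntegral.integral_zero
    rw [uIcc_of_le hsu.le] at hr
    rcases hr.1.eq_or_lt with rfl | hsr
    · exact hxs
    · exact hxl ⟨hsr, hr.2.trans_lt hu.1⟩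
  have hxu : x u = 0 := hxl ⟨hsu, hu.1⟩
  have heq := (h le_rfl hsu.le hu.2).2
  rw [hint, hxu, hxs] at heq
  exact hwu (by linarith)

lemma SolvesOn.not_eventually_le_mul (h : SolvesOn f x w s v) (hsv : s < v)
    (hx : Continuous x) (hw : Continuous w) {κ : ℝ} (hκ : 0 < κ) :
    ¬∀ᶠ u in 𝓝[<] v, κ ≤ (v - u) * f u := by
  intro hlarge
  obtain ⟨l, hl, hf⟩ := mem_nhdsLT_iff_exists_Ioo_subset.1 hlarge
  have hinc : ∀ᶠ r in 𝓝[<] v, x ((r + v) / 2) - x r - (w ((r + v) / 2) - w r) < κ / 2 := by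
    have hcont : Continuous fun r => x ((r + v) / 2) - x r - (w ((r + v) / 2) - w r) := by fun_prop
    exact nhdsWithin_le_nhds
      ((hcont.tendsto' v 0 (by simp)).eventually_lt_const (half_pos hκ))
  obtain ⟨r, hr, hrl, hrv⟩ := (hinc.and (Ioo_mem_nhdsLT (max_lt hl hsv))).exists
  rw [max_lt_iff] at hrl
  have hdrift := h.le_sub (r := r) (t := (r + v) / 2) (c := κ / (v - r)) hrl.2.le (by linarith)
    (by linarith) fun u hu => by
      have huv : u < v := by linarith [hu.2]
      have hfu : κ ≤ (v - u) * f u := hf ⟨hrl.1.trans_le hu.1, huv⟩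
      calc κ / (v - r) ≤ κ / (v - u) := by gcongr; exact hu.1
        _ ≤ f u := by rwa [div_le_iff₀' (sub_pos.2 huv)]
  have hhalf : κ / (v - r) * ((r + v) / 2 - r) = κ / 2 := by
    have : v - r ≠ 0 := (sub_pos.2 hrv).ne'
    field_simp
    ring
  linarith

lemma SolvesOn.neg_bBridge (h : SolvesOn (fun u => bBridge y u (x u)) x w s v) :
    SolvesOn (fun u => bBridge y u (-x u)) (fun u => -x u) (fun u => -w u) s v := by
  simpa only [bBridge_neg] using h.neg

lemma SolvesOn.pos_of_bBridge (h : SolvesOn (fun u => bBridge y u (x u)) x w 0 1)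
    (hx : Continuous x) (hw : IsBesselRepelling w) (hs : 0 ≤ s) (hxs : 0 < x s) {t : ℝ}
    (ht : t ∈ Ico s 1) : 0 < x t := by
  by_contra! hxt
  obtain ⟨v, hv, hxv, hpos⟩ := exists_first_zero hx ht.1 hxs hxt
  have hv1 : v < 1 := hv.2.trans_lt ht.2
  have hcont : ContinuousOn (fun u => (x u - y) / (1 - u)) (Icc s v) :=
    ContinuousOn.div (by fun_prop) (by fun_prop) fun u hu => by linarith [hu.2]
  obtain ⟨K, hK⟩ := isCompact_Icc.bddAbove_image hcont
  refine hw hs (K := K) (x := x) (v := v)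
    ⟨hv.1, hx, h.mono hs hv1.le, hpos, fun u hu => ?_, hxv⟩
  have hKu : (x u - y) / (1 - u) ≤ K := hK (mem_image_of_mem _ (Ico_subset_Icc_self hu))
  rw [bBridge_of_pos (hpos u hu), ← neg_sub (x u), neg_div]
  linarith

lemma SolvesOn.forall_pos_or_forall_neg_of_bBridge
    (h : SolvesOn (fun u => bBridge y u (x u)) x w 0 1) (hx : Continuous x)
    (hw : IsBesselRepelling w) (hw' : IsBesselRepelling fun u => -w u)
    (hne : ∃ᶠ u in 𝓝[>] 0, w u ≠ w 0) :
    (∀ t ∈ Ioo (0 : ℝ) 1, 0 < x t) ∨ ∀ t ∈ Ioo (0 : ℝ) 1, x t < 0 := by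
  have hfreq := h.frequently_ne_zero one_pos hx (fun u hu => by rw [hu, bBridge_zero]) hne
  have hx0 : ∀ t ∈ Ioo (0 : ℝ) 1, x t ≠ 0 := by
    intro t ht
    obtain ⟨q, hxq, hq⟩ := (hfreq.and_eventually (Ioo_mem_nhdsGT ht.1)).exists
    rcases hxq.lt_or_gt with hneg | hpos
    · have := h.neg_bBridge.pos_of_bBridge hx.neg hw' hq.1.le (neg_pos.2 hneg) ⟨hq.2.le, ht.2⟩
      exact (neg_pos.1 this).ne
    · exact (h.pos_of_bBridge hx hw hq.1.le hpos ⟨hq.2.le, ht.2⟩).ne'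
  by_contra! hsign
  obtain ⟨⟨t, ht, hxt⟩, ⟨u, hu, hxu⟩⟩ := hsign
  obtain ⟨q, hq, hxq⟩ := isPreconnected_Ioo.intermediate_value ht hu hx.continuousOn ⟨hxt, hxu⟩
  exact hx0 q hq hxq

-- `(1 - u) * f u` tends to `y - x 1`, and a nonzero limit would make the drift non-integrable,
-- like `1 / (1 - u)`, contradicting the continuity of `x - w` at time `1`.
lemma SolvesOn.eq_of_bBridge_of_pos (h : SolvesOn (fun u => bBridge y u (x u)) x w 0 1)
    (hy : 0 < y) (hx : Continuous x) (hw : Continuous w) (hpos : ∀ t ∈ Ioo (0 : ℝ) 1, 0 < x t) :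
    x 1 = y := by
  have hdrift : ∀ᶠ u in 𝓝[<] (1 : ℝ),
      0 < x u ∧ (1 - u) * bBridge y u (x u) = y - x u + (1 - u) / x u := by
    filter_upwards [Ioo_mem_nhdsLT one_pos] with u hu
    have : 1 - u ≠ 0 := (sub_pos.2 hu.2).ne'
    have hxu := hpos u hu
    refine ⟨hxu, ?_⟩
    rw [bBridge_of_pos hxu]
    field_simp
  rcases lt_trichotomy (x 1) y with hlt | heq | hgt
  · have hnear : ∀ᶠ u in 𝓝[<] 1, x u < (x 1 + y) / 2 :=
      nhdsWithin_le_nhds (hx.continuousAt.eventually_lt_const (by linarith))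
    refine absurd ?_ (h.not_eventually_le_mul one_pos hx hw (half_pos (sub_pos.2 hlt)))
    filter_upwards [hdrift, hnear, self_mem_nhdsWithin] with u ⟨hxu, hu⟩ hnear (hu1 : u < 1)
    rw [hu]
    have : 0 ≤ (1 - u) / x u := div_nonneg (by linarith) hxu.le
    linarith
  · exact heq
  · have hlim : ContinuousAt (fun u => y - x u + (1 - u) / x u) 1 :=
      ContinuousAt.add (by fun_prop) (ContinuousAt.div (by fun_prop) (by fun_prop) (by linarith))
    have hnear : ∀ᶠ u in 𝓝[<] 1, y - x u + (1 - u) / x u < (y - x 1) / 2 :=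
      nhdsWithin_le_nhds (hlim.eventually_lt_const (by simp; linarith))
    refine absurd ?_ (h.neg.not_eventually_le_mul one_pos hx.neg hw.neg
      (half_pos (sub_pos.2 hgt)))
    filter_upwards [hdrift, hnear] with u ⟨_, hu⟩ hnear
    linarith

lemma SolvesOn.abs_eq_and_forall_pos_or_forall_neg
    (h : SolvesOn (fun u => bBridge y u (x u)) x w 0 1) (hy : 0 < y) (hx : Continuous x)
    (hw : Continuous w)
    (hsign : (∀ t ∈ Ioo (0 : ℝ) 1, 0 < x t) ∨ ∀ t ∈ Ioo (0 : ℝ) 1, x t < 0) :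
    |x 1| = y ∧ ((∀ t ∈ Ioc (0 : ℝ) 1, 0 < x t) ∨ ∀ t ∈ Ioc (0 : ℝ) 1, x t < 0) := by
  rcases hsign with hpos | hneg
  · have hx1 := h.eq_of_bBridge_of_pos hy hx hw hpos
    refine ⟨by rw [hx1, abs_of_pos hy], .inl fun t ht => ?_⟩
    rcases ht.2.lt_or_eq with ht1 | rfl
    · exact hpos t ⟨ht.1, ht1⟩
    · rwa [hx1]
  · have hx1 := h.neg_bBridge.eq_of_bBridge_of_pos hy hx.neg hw.neg
      fun t ht => neg_pos.2 (hneg t ht)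
    refine ⟨by rw [← abs_neg, hx1, abs_of_pos hy], .inr fun t ht => ?_⟩
    rcases ht.2.lt_or_eq with ht1 | rfl
    · exact hneg t ⟨ht.1, ht1⟩
    · linarith

end BesselBridge

theorem stmt14_general {y : ℝ} (hy : 0 < y) {Ω : Type*} [m : MeasurableSpace Ω]
    {P : Measure Ω} [IsProbabilityMeasure P] {F : ℝ → MeasurableSpace Ω}
    (hFle : ∀ t, 0 ≤ t → F t ≤ m) (hFmono : ∀ s t : ℝ, 0 ≤ s → s ≤ t → F s ≤ F t)
    {B : ℝ → Ω → ℝ} (hB : IsBrownian F P B) :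
    ∀ᵐ ω ∂P, ∀ x : ℝ → ℝ, Continuous x →
      SolvesOn (fun s => bBridge y s (x s)) x (fun t => B t ω) 0 1 →
      |x 1| = y ∧ ((∀ t ∈ Ioc (0 : ℝ) 1, 0 < x t) ∨ ∀ t ∈ Ioc (0 : ℝ) 1, x t < 0) := by
  filter_upwards [hB.ae_isBesselRepelling hFle hFmono, hB.neg.ae_isBesselRepelling hFle hFmono,
    hB.ae_frequently_ne le_rfl] with ω hrep hrep' hne x hx h
  exact h.abs_eq_and_forall_pos_or_forall_neg hy hx (hB.1 ω)
    (h.forall_pos_or_forall_neg_of_bBridge hx hrep hrep' hne)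

/-- Any weak solution on `[0, 1]` of the Bessel-bridge SDE from `0` to `±y`
satisfies `|X 1| = y` a.s. and does not change its sign on `(0, 1]`. -/
theorem stmt14 (y : ℝ) (hy : 0 < y)
    {Ω : Type*} [m : MeasurableSpace Ω] (P : Measure Ω) [IsProbabilityMeasure P]
    (F : ℝ → MeasurableSpace Ω) (hFle : ∀ t, 0 ≤ t → F t ≤ m)
    (hFmono : ∀ s t : ℝ, 0 ≤ s → s ≤ t → F s ≤ F t)
    (B X : ℝ → Ω → ℝ) (hB : IsBrownian F P B)
    (hXc : ∀ ω, Continuous fun t => X t ω)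
    (hXad : ∀ t, 0 ≤ t → Measurable[F t] (X t))
    (hX0 : ∀ᵐ ω ∂P, X 0 ω = 0)
    (heq : ∀ᵐ ω ∂P, ∀ t ∈ Set.Ico (0:ℝ) 1,
      IntegrableOn (fun s => bBridge y s (X s ω)) (Set.Icc 0 t) ∧
      X t ω = (∫ s in (0:ℝ)..t, bBridge y s (X s ω)) + B t ω) :
    ∀ᵐ ω ∂P, |X 1 ω| = y ∧
      ((∀ t ∈ Set.Ioc (0:ℝ) 1, 0 < X t ω) ∨ (∀ t ∈ Set.Ioc (0:ℝ) 1, X t ω < 0)) := by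
  filter_upwards [stmt14_general hy hFle hFmono hB, heq] with ω h hω
  exact h _ (hXc ω) (SolvesOn.of_initial hω)
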